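/- Let v_1,…,v_n be votes on a finite set of m candidates, let 1 ≤ k ≤ m, and let u_1,…,u_n be votes such that for each i the number of pairs discordant between v_i and u_i is at most β. If a candidate c satisfies rank(c,v_i) > k + β for every i, then rank(c,u_i) > k for every i, so the k-approval score of c in (u_1,…,u_n) is 0. (Hence, when every swap costs at least 1 and the budget is β, every candidate ranked below position k+β in all votes can be deleted from a Swap Bribery instance for k-approval without changing the answer.) -/

import Mathlib

open Finset

/-- A vote on candidate set `C` with `m` candidates: a strict linear order on `C`,
given as a bijection mapping each candidate to its (0-based) position in `Fin m`,
position `0` being the most preferred. -/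
abbrev Vote (C : Type*) (m : ℕ) := C ≃ Fin m

/-- The rank of candidate `c` in vote `v`, an element of `{1, …, m}`;
rank 1 is the most preferred position. -/
def rankOf {C : Type*} {m : ℕ} (v : Vote C m) (c : C) : ℕ := (v c : ℕ) + 1

/-- `IsSwapSeq v l u` : the list `l` records a sequence of adjacent transpositions
transforming vote `v` into vote `u`; each list entry `(a, b)` is the (oriented)
pair of candidates being transposed, where `a` is ranked directly above `b`
in the current vote at the moment of the swap. -/
inductive IsSwapSeq {C : Type*} [DecidableEq C] {m : ℕ} :
    Vote C m → List (C × C) → Vote C m → Prop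
  | nil (v : Vote C m) : IsSwapSeq v [] v
  | cons (v : Vote C m) (a b : C) (l : List (C × C)) (u : Vote C m)
      (hadj : (v a : ℕ) + 1 = (v b : ℕ))
      (htail : IsSwapSeq ((Equiv.swap a b).trans v) l u) :
      IsSwapSeq v ((a, b) :: l) u

/-- Oriented representatives of the unordered pairs of candidates that are ranked
in opposite relative order by votes `v` and `u` (each discordant unordered pair
`{a,b}` is represented by the unique orientation with `a` preferred to `b` in `v`). -/
def discordantPairs {C : Type*} [Fintype C] [DecidableEq C] {m : ℕ}
    (v u : Vote C m) : Finset (C × C) :=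
  Finset.univ.filter fun p => v p.1 < v p.2 ∧ u p.2 < u p.1

theorem card_above {C : Type*} [Fintype C] {m : ℕ} (v : Vote C m) (c : C) :
    (Finset.univ.filter fun a => v a < v c).card = (v c : ℕ) := by
  have h : (Finset.univ.filter fun a => v a < v c).map v.toEmbedding = Finset.Iio (v c) := by
    ext x
    simp only [Finset.mem_map, Finset.mem_filter, Finset.mem_univ, true_and, Finset.mem_Iio]
    constructor
    · rintro ⟨a, ha, rfl⟩
      exact ha
    · intro hx
      exact ⟨v.symm x, by simpa using hx, by simp⟩
  rw [← Finset.card_map v.toEmbedding, h, Fin.card_Iio]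

theorem pos_le_add_discordant {C : Type*} [Fintype C] [DecidableEq C] {m : ℕ}
    (v u : Vote C m) (c : C) :
    (v c : ℕ) ≤ (u c : ℕ) + (discordantPairs v u).card := by
  have h1 : (Finset.univ.filter fun a => v a < v c) ⊆
      (Finset.univ.filter fun a => u a < u c) ∪
        (Finset.univ.filter fun a => v a < v c ∧ u c < u a) := by
    intro a ha
    simp only [Finset.mem_union, Finset.mem_filter, Finset.mem_univ, true_and] at ha ⊢
    rcases lt_trichotomy (u a) (u c) with h | h | h
    · exact Or.inl h
    · rw [u.injective h] at ha
      exact absurd ha (lt_irrefl _)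
    · exact Or.inr ⟨ha, h⟩
  have h2 : (Finset.univ.filter fun a => v a < v c ∧ u c < u a).card ≤
      (discordantPairs v u).card := by
    apply Finset.card_le_card_of_injOn (fun a => (a, c))
    · intro a ha
      simpa [discordantPairs] using ha
    · intro a _ b _ hab
      exact (Prod.mk.inj hab).1
  have h3 := (Finset.card_le_card h1).trans (Finset.card_union_le _ _)
  rw [card_above, card_above] at h3
  omega

/-- Let `v_1, …, v_n` and `u_1, …, u_n` be votes on `m` candidates such
that for each `i` the number of pairs discordant between `v_i` and `u_i` is at most `β`.
If a candidate `c` satisfies `rank(c,v_i) > k + β` for every `i`, then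
`rank(c,u_i) > k` for every `i`, so the `k`-approval score of `c` in `(u_1,…,u_n)`
is `0`. -/
theorem low_ranked_candidate_keeps_zero_score
    {C : Type*} [Fintype C] [DecidableEq C] {m k n β : ℕ}
    (v u : Fin n → Vote C m)
    (hdis : ∀ i, (discordantPairs (v i) (u i)).card ≤ β)
    (c : C) (hc : ∀ i, k + β < rankOf (v i) c) :
    (∀ i, k < rankOf (u i) c) ∧
    (Finset.univ.filter fun i => rankOf (u i) c ≤ k).card = 0 := by
  have key : ∀ i, k < rankOf (u i) c := by
    intro i
    have h1 := pos_le_add_discordant (v i) (u i) c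
    have h2 := hdis i
    have h3 := hc i
    unfold rankOf at *
    omega
  refine ⟨key, ?_⟩
  rw [Finset.card_eq_zero, Finset.filter_eq_empty_iff]
  intro i _
  exact not_le.mpr (key i)
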